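/- arXiv:1104.3924 — 4 statements merged into one kernel-verified Lean document; each statement's English description precedes it below -/
import Mathlib

section
/- Let C > 0 and A > 0. Let h : ℝ → ℝ be differentiable with h(x) > 0 for all x, |h′(x)| ≤ C·h(x) for all x ∈ ℝ, h integrable on ℝ, and ∫_ℝ h(x) dx ≤ A. Then h(x) ≤ (C·e/2)·A for every x ∈ ℝ. -/
open MeasureTheory

/-- Real-analysis core of part (3) of Lemma 5.2 (est_2): if `h > 0` is differentiable with
`|h'| ≤ C·h` and `∫_ℝ h ≤ A`, then `h ≤ (C·e/2)·A` everywhere. -/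
theorem stmt2 (C A : ℝ) (hC : 0 < C) (hA : 0 < A) (h : ℝ → ℝ)
    (hdiff : Differentiable ℝ h) (hpos : ∀ x, 0 < h x)
    (hbound : ∀ x, |deriv h x| ≤ C * h x)
    (hint : Integrable h (volume : Measure ℝ))
    (hintA : ∫ x, h x ≤ A) :
    ∀ x : ℝ, h x ≤ C * Real.exp 1 / 2 * A := by
  intro x
  have hlog : ∀ y, |Real.log (h y) - Real.log (h x)| ≤ C * |y - x| := by
    intro y
    have := Convex.norm_image_sub_le_of_norm_deriv_le (𝕜 := ℝ)
      (f := fun z => Real.log (h z)) (C := C) (s := Set.univ) (x := x) (y := y)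
      (fun z _ => (hdiff z).log (hpos z).ne')
      (fun z _ => by
        rw [deriv.log (hdiff z) (hpos z).ne', Real.norm_eq_abs, abs_div, abs_of_pos (hpos z),
          div_le_iff₀ (hpos z)]
        exact hbound z) convex_univ trivial trivial
    simpa [Real.norm_eq_abs] using this
  have hlow : ∀ y ∈ Set.Icc (x - C⁻¹) (x + C⁻¹), Real.exp (-1) * h x ≤ h y := by
    intro y hy
    have h1 : |y - x| ≤ C⁻¹ := abs_le.2 ⟨by linarith [hy.1], by linarith [hy.2]⟩
    have h2 : C * |y - x| ≤ 1 := by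
      calc C * |y - x| ≤ C * C⁻¹ := by gcongr
        _ = 1 := mul_inv_cancel₀ hC.ne'
    have h3 := (abs_le.1 (hlog y)).1
    calc Real.exp (-1) * h x = Real.exp (-1 + Real.log (h x)) := by
          rw [Real.exp_add, Real.exp_log (hpos x)]
      _ ≤ Real.exp (Real.log (h y)) := Real.exp_le_exp.2 (by linarith)
      _ = h y := Real.exp_log (hpos y)
  have hc : ∫ _ in Set.Icc (x - C⁻¹) (x + C⁻¹), Real.exp (-1) * h x
      ≤ ∫ y in Set.Icc (x - C⁻¹) (x + C⁻¹), h y :=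
    setIntegral_mono_on (integrableOn_const (by simp)) hint.integrableOn measurableSet_Icc hlow
  have hs : ∫ y in Set.Icc (x - C⁻¹) (x + C⁻¹), h y ≤ ∫ y, h y :=
    setIntegral_le_integral hint (Filter.Eventually.of_forall fun y => (hpos y).le)
  have hCi : 0 < C⁻¹ := inv_pos.2 hC
  rw [setIntegral_const, Real.volume_real_Icc_of_le (by linarith), smul_eq_mul] at hc
  have hfin : (x + C⁻¹ - (x - C⁻¹)) * (Real.exp (-1) * h x) ≤ A := by linarith
  have hE : Real.exp 1 * Real.exp (-1) = 1 := by rw [← Real.exp_add]; simp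
  have hCC : C * C⁻¹ = 1 := mul_inv_cancel₀ hC.ne'
  calc h x = (C * C⁻¹) * (Real.exp 1 * Real.exp (-1)) * h x := by rw [hE, hCC]; ring
    _ = C * Real.exp 1 / 2 * ((x + C⁻¹ - (x - C⁻¹)) * (Real.exp (-1) * h x)) := by ring
    _ ≤ C * Real.exp 1 / 2 * A := by gcongr
end

section
/- Fix λ > 0, T > 0, C > 0, and t ∈ [0, T). Let f : ℝ → ℝ be twice differentiable with f′(ρ) > 0 for all ρ, with f(ρ) → a as ρ → −∞ and f(ρ) → b as ρ → +∞ where b − a = 2λ(T − t), and suppose |f″(ρ)/f′(ρ)| ≤ C for all ρ ∈ ℝ. Then f′(ρ) ≤ C·e·λ·(T − t) for every ρ ∈ ℝ. -/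
/-- Part (3) of Lemma 5.2 (est_2) at a time slice: if `f' > 0`, `f → a` at `−∞`,
`f → b` at `+∞` with `b − a = 2λ(T − t)`, and `|f''/f'| ≤ C`, then
`f' ≤ C·e·λ·(T − t)` everywhere. -/
theorem stmt3 (lam T C t a b : ℝ) (hlam : 0 < lam) (hT : 0 < T) (hC : 0 < C)
    (ht : t ∈ Set.Ico 0 T) (f : ℝ → ℝ)
    (hf : Differentiable ℝ f) (hf' : Differentiable ℝ (deriv f))
    (hfpos : ∀ ρ, 0 < deriv f ρ)
    (ha : Filter.Tendsto f Filter.atBot (nhds a))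
    (hb : Filter.Tendsto f Filter.atTop (nhds b))
    (hba : b - a = 2 * lam * (T - t))
    (hbound : ∀ ρ, |deriv (deriv f) ρ / deriv f ρ| ≤ C) :
    ∀ ρ : ℝ, deriv f ρ ≤ C * Real.exp 1 * lam * (T - t) := by
  intro x
  have hmono : StrictMono f := strictMono_of_deriv_pos hfpos
  have hfa : ∀ y, a ≤ f y := fun y => hmono.monotone.le_of_tendsto ha y
  have hfb : ∀ y, f y ≤ b := fun y => hmono.monotone.ge_of_tendsto hb y
  have hanti : Antitone (fun y => deriv f y - C * f y) := by
    apply antitone_of_deriv_nonpos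
    · exact hf'.sub (hf.const_mul C)
    · intro y
      have hd : HasDerivAt (fun y => deriv f y - C * f y)
          (deriv (deriv f) y - C * deriv f y) y :=
        (hf' y).hasDerivAt.sub ((hf y).hasDerivAt.const_mul C)
      rw [hd.deriv]
      have h1 := (abs_le.mp (hbound y)).2
      rw [div_le_iff₀ (hfpos y)] at h1
      linarith
  have key : deriv f x ≤ C * (f x - a) := by
    by_contra hcon
    push Not at hcon
    obtain ⟨ε, hε⟩ : ∃ ε, ε = deriv f x - C * (f x - a) := ⟨_, rfl⟩
    have hε0 : 0 < ε := by linarith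
    have hlow : ∀ y, y ≤ x → ε ≤ deriv f y := by
      intro y hy
      have h1 := hanti hy
      simp only at h1
      have h2 : 0 ≤ C * (f y - a) := mul_nonneg hC.le (by linarith [hfa y])
      linarith
    have hq : 0 ≤ (f x - a) / ε := div_nonneg (by linarith [hfa x]) hε0.le
    obtain ⟨y, hy⟩ : ∃ y, y = x - (f x - a) / ε - 1 := ⟨_, rfl⟩
    have hyx : y < x := by linarith
    obtain ⟨c, hc, hce⟩ := exists_deriv_eq_slope f hyx hf.continuous.continuousOn
      hf.differentiableOn
    have h3 := hlow c hc.2.le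
    rw [hce, le_div_iff₀ (by linarith)] at h3
    have h4 : ε * (x - y) = f x - a + ε := by
      rw [hy]; field_simp; ring
    linarith [hfa y]
  have he : (2 : ℝ) ≤ Real.exp 1 := by linarith [Real.add_one_le_exp (1 : ℝ)]
  have hpos : 0 ≤ C * lam * (T - t) :=
    mul_nonneg (mul_pos hC hlam).le (by linarith [ht.2])
  have h5 : C * (f x - a) ≤ C * (b - a) :=
    mul_le_mul_of_nonneg_left (by linarith [hfb x]) hC.le
  rw [hba] at h5
  have h6 := mul_le_mul_of_nonneg_right he hpos
  linarith
end

section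
/- Fix an integer n ≥ 1 and reals ν ∈ ℝ, λ > 0. Let I ⊆ ℝ be an open interval and let f : ℝ × I → ℝ be C^∞ with f(ρ,t) > 0 and f_ρ(ρ,t) > 0 everywhere, satisfying ∂f/∂t = f_ρρ/f_ρ + n·f_ρ/f − ν/λ on ℝ × I. Suppose (ρ₀, t₀) ∈ ℝ × I is a point at which ∂/∂ρ (f_ρρ/f_ρ) = 0. Then at (ρ₀, t₀) one has f_ρρρ = f_ρρ²/f_ρ, and moreover (∂/∂t − (1/f_ρ)·∂²/∂ρ²)(f_ρρ/f_ρ) = 2n·f_ρ²/f³ − 2n·f_ρρ/f² at (ρ₀, t₀). -/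
open Set

/-- Partial derivative in the first (spatial) variable `ρ` of a function of `(ρ, t)`. -/
noncomputable def dRho (g : ℝ → ℝ → ℝ) : ℝ → ℝ → ℝ :=
  fun ρ t => deriv (fun s => g s t) ρ



def SmoothS (c d : ℝ) (g : ℝ → ℝ → ℝ) : Prop :=
  ContDiffOn ℝ (⊤ : ℕ∞) (fun p : ℝ × ℝ => g p.1 p.2) (univ ×ˢ Ioo c d)

noncomputable def dTime (g : ℝ → ℝ → ℝ) : ℝ → ℝ → ℝ :=
  fun ρ t => deriv (fun τ => g ρ τ) t

lemma isOpen_S (c d : ℝ) : IsOpen ((univ : Set ℝ) ×ˢ Ioo c d) := isOpen_univ.prod isOpen_Ioo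

lemma SmoothS.cda {c d : ℝ} {g : ℝ → ℝ → ℝ} (hg : SmoothS c d g) {ρ t : ℝ} (ht : t ∈ Ioo c d) :
    ContDiffAt ℝ (⊤ : ℕ∞) (fun p : ℝ × ℝ => g p.1 p.2) (ρ, t) :=
  ContDiffOn.contDiffAt hg ((isOpen_S c d).mem_nhds ⟨mem_univ _, ht⟩)

lemma SmoothS.hfd {c d : ℝ} {g : ℝ → ℝ → ℝ} (hg : SmoothS c d g) {ρ t : ℝ} (ht : t ∈ Ioo c d) :
    HasFDerivAt (fun p : ℝ × ℝ => g p.1 p.2)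
      (fderiv ℝ (fun p : ℝ × ℝ => g p.1 p.2) (ρ, t)) (ρ, t) :=
  ((hg.cda ht).differentiableAt (by simp)).hasFDerivAt

lemma SmoothS.hr0 {c d : ℝ} {g : ℝ → ℝ → ℝ} (hg : SmoothS c d g) {ρ t : ℝ} (ht : t ∈ Ioo c d) :
    HasDerivAt (fun s => g s t) (fderiv ℝ (fun p : ℝ × ℝ => g p.1 p.2) (ρ, t) (1, 0)) ρ := by
  have h1 : HasDerivAt (fun s : ℝ => ((s, t) : ℝ × ℝ)) ((1, 0) : ℝ × ℝ) ρ :=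
    (hasDerivAt_id ρ).prodMk (hasDerivAt_const ρ t)
  exact HasFDerivAt.comp_hasDerivAt ρ (f := fun s : ℝ => ((s, t) : ℝ × ℝ)) (hg.hfd ht) h1

lemma SmoothS.ht0 {c d : ℝ} {g : ℝ → ℝ → ℝ} (hg : SmoothS c d g) {ρ t : ℝ} (ht : t ∈ Ioo c d) :
    HasDerivAt (fun s => g ρ s) (fderiv ℝ (fun p : ℝ × ℝ => g p.1 p.2) (ρ, t) (0, 1)) t := by
  have h1 : HasDerivAt (fun s : ℝ => ((ρ, s) : ℝ × ℝ)) ((0, 1) : ℝ × ℝ) t :=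
    (hasDerivAt_const t ρ).prodMk (hasDerivAt_id t)
  exact HasFDerivAt.comp_hasDerivAt t (f := fun s : ℝ => ((ρ, s) : ℝ × ℝ)) (hg.hfd ht) h1

lemma SmoothS.hr {c d : ℝ} {g : ℝ → ℝ → ℝ} (hg : SmoothS c d g) {t : ℝ} (ht : t ∈ Ioo c d)
    (ρ : ℝ) : HasDerivAt (fun s => g s t) (dRho g ρ t) ρ :=
  (hg.hr0 ht).differentiableAt.hasDerivAt

lemma SmoothS.ht {c d : ℝ} {g : ℝ → ℝ → ℝ} (hg : SmoothS c d g) {t : ℝ} (ht : t ∈ Ioo c d)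
    (ρ : ℝ) : HasDerivAt (fun s => g ρ s) (dTime g ρ t) t :=
  (hg.ht0 ht).differentiableAt.hasDerivAt

lemma SmoothS.fd {c d : ℝ} {g : ℝ → ℝ → ℝ} (hg : SmoothS c d g) :
    ContDiffOn ℝ (⊤ : ℕ∞) (fderiv ℝ (fun p : ℝ × ℝ => g p.1 p.2)) (univ ×ˢ Ioo c d) :=
  ContDiffOn.fderiv_of_isOpen hg (isOpen_S c d) (by simp)

lemma SmoothS.dRho {c d : ℝ} {g : ℝ → ℝ → ℝ} (hg : SmoothS c d g) : SmoothS c d (dRho g) := by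
  refine (hg.fd.clm_apply (contDiffOn_const (c := ((1, 0) : ℝ × ℝ)))).congr ?_
  rintro ⟨ρ, t⟩ ⟨-, ht⟩
  exact (hg.hr0 ht).deriv

lemma SmoothS.symm {c d : ℝ} {g : ℝ → ℝ → ℝ} (hg : SmoothS c d g) {ρ t : ℝ}
    (ht : t ∈ Ioo c d) : dTime (_root_.dRho g) ρ t = _root_.dRho (dTime g) ρ t := by
  set G := fun p : ℝ × ℝ => g p.1 p.2 with hG
  have hd : HasFDerivAt (fderiv ℝ G) (fderiv ℝ (fderiv ℝ G) (ρ, t)) (ρ, t) :=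
    ((hg.fd.contDiffAt ((isOpen_S c d).mem_nhds ⟨mem_univ _, ht⟩)).differentiableAt
      (by simp)).hasFDerivAt
  have hs : IsSymmSndFDerivAt ℝ G (ρ, t) := (hg.cda ht).isSymmSndFDerivAt (by
    simp only [minSmoothness_of_isRCLikeNormedField]; exact WithTop.coe_le_coe.2 le_top)
  have h1 : HasDerivAt (fun s : ℝ => ((s, t) : ℝ × ℝ)) ((1, 0) : ℝ × ℝ) ρ :=
    (hasDerivAt_id ρ).prodMk (hasDerivAt_const ρ t)
  have h2 : HasDerivAt (fun s : ℝ => ((ρ, s) : ℝ × ℝ)) ((0, 1) : ℝ × ℝ) t :=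
    (hasDerivAt_const t ρ).prodMk (hasDerivAt_id t)
  have e1 : HasDerivAt (fun s => fderiv ℝ G (s, t) (0, 1))
      (fderiv ℝ (fderiv ℝ G) (ρ, t) (1, 0) (0, 1)) ρ := by
    have := (HasFDerivAt.comp_hasDerivAt ρ (f := fun s : ℝ => ((s, t) : ℝ × ℝ)) hd h1).clm_apply
      (hasDerivAt_const ρ ((0, 1) : ℝ × ℝ))
    simpa using this
  have e2 : HasDerivAt (fun s => fderiv ℝ G (ρ, s) (1, 0))
      (fderiv ℝ (fderiv ℝ G) (ρ, t) (0, 1) (1, 0)) t := by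
    have := (HasFDerivAt.comp_hasDerivAt t (f := fun s : ℝ => ((ρ, s) : ℝ × ℝ)) hd h2).clm_apply
      (hasDerivAt_const t ((1, 0) : ℝ × ℝ))
    simpa using this
  have a1 : _root_.dRho (dTime g) ρ t = fderiv ℝ (fderiv ℝ G) (ρ, t) (1, 0) (0, 1) := by
    have : (fun s => dTime g s t) = (fun s => fderiv ℝ G (s, t) (0, 1)) :=
      funext fun s => (hg.ht0 ht).deriv
    unfold _root_.dRho
    rw [this, e1.deriv]
  have a2 : dTime (_root_.dRho g) ρ t = fderiv ℝ (fderiv ℝ G) (ρ, t) (0, 1) (1, 0) := by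
    have : (fun s => _root_.dRho g ρ s) =ᶠ[nhds t] (fun s => fderiv ℝ G (ρ, s) (1, 0)) := by
      filter_upwards [isOpen_Ioo.mem_nhds ht] with s hs
      exact (hg.hr0 hs).deriv
    exact this.deriv_eq.trans e2.deriv
  rw [a1, a2]
  exact hs _ _

/-- The key cancellation identity at a spatial critical point of `f_ρρ/f_ρ` used in the
maximum-principle argument proving part (2) of Lemma 5.2 (est_2): at a point where
`∂/∂ρ (f_ρρ/f_ρ) = 0` one has `f_ρρρ = f_ρρ²/f_ρ` and
`(∂/∂t − (1/f_ρ)·∂²/∂ρ²)(f_ρρ/f_ρ) = 2n·f_ρ²/f³ − 2n·f_ρρ/f²`. -/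
theorem stmt5 (n : ℕ) (hn : 1 ≤ n) (ν lam : ℝ) (hlam : 0 < lam)
    (c d : ℝ) (f : ℝ → ℝ → ℝ)
    (hf : ContDiffOn ℝ (⊤ : ℕ∞) (fun p : ℝ × ℝ => f p.1 p.2) (univ ×ˢ Ioo c d))
    (hfpos : ∀ ρ t, t ∈ Ioo c d → 0 < f ρ t)
    (hfρpos : ∀ ρ t, t ∈ Ioo c d → 0 < dRho f ρ t)
    (hPDE : ∀ ρ t, t ∈ Ioo c d →
      deriv (fun τ => f ρ τ) t
        = dRho (dRho f) ρ t / dRho f ρ t + n * dRho f ρ t / f ρ t - ν / lam)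
    (ρ₀ t₀ : ℝ) (ht₀ : t₀ ∈ Ioo c d)
    (hcrit : deriv (fun s => dRho (dRho f) s t₀ / dRho f s t₀) ρ₀ = 0) :
    dRho (dRho (dRho f)) ρ₀ t₀ = (dRho (dRho f) ρ₀ t₀) ^ 2 / dRho f ρ₀ t₀ ∧
    deriv (fun τ => dRho (dRho f) ρ₀ τ / dRho f ρ₀ τ) t₀
        - (1 / dRho f ρ₀ t₀)
          * deriv (fun s => deriv (fun u => dRho (dRho f) u t₀ / dRho f u t₀) s) ρ₀
      = 2 * n * (dRho f ρ₀ t₀) ^ 2 / (f ρ₀ t₀) ^ 3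
        - 2 * n * dRho (dRho f) ρ₀ t₀ / (f ρ₀ t₀) ^ 2 := by
  have s0 : SmoothS c d f := hf
  have s1 := s0.dRho
  have s2 := s1.dRho
  have s3 := s2.dRho
  have n0 : ∀ ρ, f ρ t₀ ≠ 0 := fun ρ => (hfpos ρ t₀ ht₀).ne'
  have n1 : ∀ ρ, dRho f ρ t₀ ≠ 0 := fun ρ => (hfρpos ρ t₀ ht₀).ne'
  have h0 := s0.hr ht₀
  have h1 := s1.hr ht₀
  have h2 := s2.hr ht₀
  have h3 := s3.hr ht₀
  have t1 := s1.ht ht₀ ρ₀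
  have t2 := s2.ht ht₀ ρ₀
  have y1 : ∀ ρ, dTime (dRho f) ρ t₀ = dRho (dTime f) ρ t₀ := fun ρ => s0.symm ht₀
  have y2 : dTime (dRho (dRho f)) ρ₀ t₀ = dRho (dTime (dRho f)) ρ₀ t₀ := s1.symm ht₀
  have p0 : (fun s => dTime f s t₀) = fun s =>
      dRho (dRho f) s t₀ / dRho f s t₀ + n * dRho f s t₀ / f s t₀ - ν / lam :=
    funext fun s => hPDE s t₀ ht₀
  have q1 : ∀ ρ, HasDerivAt (fun s => dRho (dRho f) s t₀ / dRho f s t₀) _ ρ :=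
    fun ρ => (h2 ρ).fun_div (h1 ρ) (n1 ρ)
  have p1 : (fun s => dTime (dRho f) s t₀) = _ := funext fun s => (y1 s).trans
    ((congrArg (fun F => deriv F s) p0).trans
      (((q1 s).fun_add (((h1 s).const_mul (n : ℝ)).fun_div (h0 s) (n0 s))).sub_const (ν / lam)).deriv)
  have q2fun : (fun s => deriv (fun u => dRho (dRho f) u t₀ / dRho f u t₀) s) = _ :=
    funext fun s => (q1 s).deriv
  have q2 := (((h3 ρ₀).fun_mul (h1 ρ₀)).fun_sub ((h2 ρ₀).fun_mul (h2 ρ₀))).fun_div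
    ((h1 ρ₀).fun_pow 2) (pow_ne_zero 2 (n1 ρ₀))
  have p2 : dTime (dRho (dRho f)) ρ₀ t₀ = _ := y2.trans
    ((congrArg (fun F => deriv F ρ₀) p1).trans
      (q2.fun_add (((((h2 ρ₀).const_mul (n : ℝ)).fun_mul (h0 ρ₀)).fun_sub
        (((h1 ρ₀).const_mul (n : ℝ)).fun_mul (h1 ρ₀))).fun_div ((h0 ρ₀).fun_pow 2)
          (pow_ne_zero 2 (n0 ρ₀)))).deriv)
  have p1' := congrFun p1 ρ₀
  have k0 := n0 ρ₀
  have k1 := n1 ρ₀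
  have e3 : dRho (dRho (dRho f)) ρ₀ t₀ = (dRho (dRho f) ρ₀ t₀) ^ 2 / dRho f ρ₀ t₀ := by
    have h := (q1 ρ₀).deriv.symm.trans hcrit
    rw [div_eq_zero_iff, or_iff_left (pow_ne_zero 2 k1)] at h
    rw [eq_div_iff k1]
    linarith
  refine ⟨e3, ?_⟩
  rw [q2fun, q2.deriv, (t2.fun_div t1 k1).deriv, p2]
  rw [p1', e3]
  generalize dRho (dRho (dRho (dRho f))) ρ₀ t₀ = d4
  generalize dRho (dRho f) ρ₀ t₀ = d2
  generalize dRho f ρ₀ t₀ = d1 at *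
  generalize f ρ₀ t₀ = d0 at *
  clear * - k0 k1
  field_simp
  push_cast
  ring
end

section
/- Fix an integer n ≥ 1, reals ν ∈ ℝ, λ > 0, and T > 0. Let f : ℝ × [0, T) → ℝ be C^∞ with f > 0 and f_ρ > 0 everywhere, satisfying ∂f/∂t = f_ρρ/f_ρ + n·f_ρ/f − ν/λ. Let 0 < ε < T and suppose there exists (ρ*, t*) ∈ ℝ × [0, T − ε] at which the function f_ρρ/f_ρ attains its supremum over ℝ × [0, T − ε]. Then (f_ρρ/f_ρ)(ρ*, t*) ≤ max( sup_{σ ∈ ℝ} (f_ρρ/f_ρ)(σ, 0), (f_ρ/f)(ρ*, t*) ). In particular, if C₀ > 1 satisfies f ≥ C₀⁻¹ and f_ρ ≤ C₀ on ℝ × [0, T), then f_ρρ/f_ρ ≤ max( sup_{σ ∈ ℝ} (f_ρρ/f_ρ)(σ, 0), C₀² ) everywhere on ℝ × [0, T − ε]. -/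
open Set

noncomputable def dTau (g : ℝ → ℝ → ℝ) : ℝ → ℝ → ℝ :=
  fun ρ t => deriv (fun s => g ρ s) t

def SmoothOnStrip (T : ℝ) (g : ℝ → ℝ → ℝ) : Prop :=
  ∀ ρ t, t ∈ Ioo 0 T → ContDiffAt ℝ (⊤ : ℕ∞) (fun p : ℝ × ℝ => g p.1 p.2) (ρ, t)

lemma SmoothOnStrip.diff {T : ℝ} {g : ℝ → ℝ → ℝ} (h : SmoothOnStrip T g) {ρ t : ℝ}
    (ht : t ∈ Ioo 0 T) : DifferentiableAt ℝ (fun p : ℝ × ℝ => g p.1 p.2) (ρ, t) :=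
  (h ρ t ht).differentiableAt (by simp)

lemma SmoothOnStrip.rho' {T : ℝ} {g : ℝ → ℝ → ℝ} (h : SmoothOnStrip T g) {ρ t : ℝ}
    (ht : t ∈ Ioo 0 T) :
    HasDerivAt (fun s => g s t) (fderiv ℝ (fun p : ℝ × ℝ => g p.1 p.2) (ρ, t) (1, 0)) ρ := by
  have h1 : HasDerivAt (fun s : ℝ => (s, t)) ((1 : ℝ), (0 : ℝ)) ρ :=
    (hasDerivAt_id ρ).prodMk (hasDerivAt_const ρ t)
  exact (h.diff ht).hasFDerivAt.comp_hasDerivAt ρ h1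

lemma SmoothOnStrip.tau' {T : ℝ} {g : ℝ → ℝ → ℝ} (h : SmoothOnStrip T g) {ρ t : ℝ}
    (ht : t ∈ Ioo 0 T) :
    HasDerivAt (fun s => g ρ s) (fderiv ℝ (fun p : ℝ × ℝ => g p.1 p.2) (ρ, t) (0, 1)) t := by
  have h1 : HasDerivAt (fun s : ℝ => (ρ, s)) ((0 : ℝ), (1 : ℝ)) t :=
    (hasDerivAt_const t ρ).prodMk (hasDerivAt_id t)
  exact (h.diff ht).hasFDerivAt.comp_hasDerivAt t h1

lemma SmoothOnStrip.rho {T : ℝ} {g : ℝ → ℝ → ℝ} (h : SmoothOnStrip T g) {ρ t : ℝ}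
    (ht : t ∈ Ioo 0 T) : HasDerivAt (fun s => g s t) (dRho g ρ t) ρ :=
  (h.rho' ht).differentiableAt.hasDerivAt

lemma SmoothOnStrip.tau {T : ℝ} {g : ℝ → ℝ → ℝ} (h : SmoothOnStrip T g) {ρ t : ℝ}
    (ht : t ∈ Ioo 0 T) : HasDerivAt (fun s => g ρ s) (dTau g ρ t) t :=
  (h.tau' ht).differentiableAt.hasDerivAt

lemma strip_nhds {T : ℝ} {ρ t : ℝ} (ht : t ∈ Ioo 0 T) :
    ∀ᶠ p : ℝ × ℝ in nhds (ρ, t), p.2 ∈ Ioo 0 T :=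
  continuous_snd.continuousAt.eventually (isOpen_Ioo.mem_nhds ht)

lemma SmoothOnStrip.rho_eq {T : ℝ} {g : ℝ → ℝ → ℝ} (h : SmoothOnStrip T g) {ρ t : ℝ}
    (ht : t ∈ Ioo 0 T) :
    (fun p : ℝ × ℝ => dRho g p.1 p.2) =ᶠ[nhds (ρ, t)]
      fun p => fderiv ℝ (fun p : ℝ × ℝ => g p.1 p.2) p (1, 0) := by
  filter_upwards [strip_nhds ht] with p hp
  exact (h.rho' hp).deriv

lemma SmoothOnStrip.tau_eq {T : ℝ} {g : ℝ → ℝ → ℝ} (h : SmoothOnStrip T g) {ρ t : ℝ}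
    (ht : t ∈ Ioo 0 T) :
    (fun p : ℝ × ℝ => dTau g p.1 p.2) =ᶠ[nhds (ρ, t)]
      fun p => fderiv ℝ (fun p : ℝ × ℝ => g p.1 p.2) p (0, 1) := by
  filter_upwards [strip_nhds ht] with p hp
  exact (h.tau' hp).deriv

lemma SmoothOnStrip.fd {T : ℝ} {g : ℝ → ℝ → ℝ} (h : SmoothOnStrip T g) {ρ t : ℝ}
    (ht : t ∈ Ioo 0 T) :
    ContDiffAt ℝ (⊤ : ℕ∞) (fderiv ℝ (fun p : ℝ × ℝ => g p.1 p.2)) (ρ, t) :=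
  (h ρ t ht).fderiv_right (by simp)

lemma SmoothOnStrip.dRho {T : ℝ} {g : ℝ → ℝ → ℝ} (h : SmoothOnStrip T g) :
    SmoothOnStrip T (dRho g) := fun _ _ ht =>
  ((h.fd ht).clm_apply contDiffAt_const).congr_of_eventuallyEq (h.rho_eq ht)

lemma SmoothOnStrip.dTau {T : ℝ} {g : ℝ → ℝ → ℝ} (h : SmoothOnStrip T g) :
    SmoothOnStrip T (dTau g) := fun _ _ ht =>
  ((h.fd ht).clm_apply contDiffAt_const).congr_of_eventuallyEq (h.tau_eq ht)

lemma SmoothOnStrip.comm {T : ℝ} {g : ℝ → ℝ → ℝ} (h : SmoothOnStrip T g) {ρ t : ℝ}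
    (ht : t ∈ Ioo 0 T) : _root_.dTau (_root_.dRho g) ρ t = _root_.dRho (_root_.dTau g) ρ t := by
  have hd : DifferentiableAt ℝ (fderiv ℝ (fun p : ℝ × ℝ => g p.1 p.2)) (ρ, t) :=
    (h.fd ht).differentiableAt (by simp)
  have e1 : _root_.dTau (_root_.dRho g) ρ t = _ := (h.dRho.tau' ht).deriv
  have e2 : _root_.dRho (_root_.dTau g) ρ t = _ := (h.dTau.rho' ht).deriv
  rw [e1, e2, (h.rho_eq ht).fderiv_eq, (h.tau_eq ht).fderiv_eq,
    fderiv_clm_apply hd (differentiableAt_const _), fderiv_clm_apply hd (differentiableAt_const _)]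
  have hs : IsSymmSndFDerivAt ℝ (fun p : ℝ × ℝ => g p.1 p.2) (ρ, t) :=
    (h ρ t ht).isSymmSndFDerivAt (by
      simp only [minSmoothness_of_isRCLikeNormedField]; exact WithTop.coe_le_coe.2 (le_top : (2 : ℕ∞) ≤ ⊤))
  simpa using hs (0, 1) (1, 0)

lemma second_deriv_nonpos {w w' : ℝ → ℝ} {x w2 : ℝ} (h1 : ∀ s, HasDerivAt w (w' s) s)
    (h2 : HasDerivAt w' w2 x) (hm : ∀ s, w s ≤ w x) : w' x = 0 ∧ w2 ≤ 0 := by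
  have hlm : IsLocalMax w x := Filter.Eventually.of_forall hm
  have h0 : w' x = 0 := hlm.hasDerivAt_eq_zero (h1 x)
  have hdw : deriv w = w' := funext fun s => (h1 s).deriv
  refine ⟨h0, ?_⟩
  by_contra! hc
  have hmin : IsLocalMin w x := isLocalMin_of_deriv_deriv_pos
    (by rw [hdw, h2.deriv]; exact hc) (by rw [hdw, h0]) (h1 x).continuousAt
  have hev : w =ᶠ[nhds x] fun _ => w x := by
    filter_upwards [hmin] with s hs
    exact le_antisymm (hm s) hs
  have h3 := hev.deriv.deriv_eq
  rw [hdw, h2.deriv] at h3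
  simp at h3
  exact hc.ne' h3

lemma deriv_nonneg_left_max {w : ℝ → ℝ} {t d : ℝ} (ht : 0 < t) (h : HasDerivAt w d t)
    (hm : ∀ s ∈ Icc 0 t, w s ≤ w t) : 0 ≤ d := by
  have h1 := (hasDerivAt_iff_tendsto_slope_left_right.1 h).1
  refine ge_of_tendsto h1 ?_
  filter_upwards [Ioo_mem_nhdsLT ht] with s hs
  rw [slope_def_field]
  exact div_nonneg_of_nonpos (sub_nonpos.2 (hm s ⟨hs.1.le, hs.2.le⟩)) (sub_nonpos.2 hs.2.le)

lemma key (n : ℕ) (hn : 1 ≤ n) (c T : ℝ)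
    (f : ℝ → ℝ → ℝ) (hS : SmoothOnStrip T f)
    (hfpos : ∀ ρ t, t ∈ Ico 0 T → 0 < f ρ t)
    (hfρpos : ∀ ρ t, t ∈ Ico 0 T → 0 < dRho f ρ t)
    (hPDE : ∀ ρ t, t ∈ Ico 0 T →
      dTau f ρ t
        = dRho (dRho f) ρ t / dRho f ρ t + n * dRho f ρ t / f ρ t - c)
    (x t : ℝ) (ht : t ∈ Ioo 0 T)
    (hx : ∀ ρ, dRho (dRho f) ρ t / dRho f ρ t ≤ dRho (dRho f) x t / dRho f x t)
    (htm : ∀ s ∈ Icc 0 t, dRho (dRho f) x s / dRho f x s ≤ dRho (dRho f) x t / dRho f x t) :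
    dRho (dRho f) x t / dRho f x t ≤ dRho f x t / f x t := by
  have ht' : t ∈ Ico 0 T := ⟨ht.1.le, ht.2⟩
  have p0 := fun s => hfpos s t ht'
  have p1 := fun s => hfρpos s t ht'
  have d0 := fun s => hS.rho (ρ := s) ht
  have d1 := fun s => hS.dRho.rho (ρ := s) ht
  have d2 := fun s => hS.dRho.dRho.rho (ρ := s) ht
  have d3 := fun s => hS.dRho.dRho.dRho.rho (ρ := s) ht
  -- spatial derivatives of u
  have w1 := fun s => (d2 s).div (d1 s) (p1 s).ne'
  have w2 := ((((d3 x).mul (d1 x)).sub ((d2 x).mul (d2 x))).div ((d1 x).pow 2)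
    (pow_ne_zero 2 (p1 x).ne'))
  obtain ⟨z1, z2⟩ := second_deriv_nonpos w1 w2 hx
  -- first mixed derivative
  have v1 := fun s => ((d1 s).const_mul (n : ℝ)).div (d0 s) (p0 s).ne'
  have v2 := ((((d2 x).const_mul (n : ℝ)).mul (d0 x)).sub
    (((d1 x).const_mul (n : ℝ)).mul (d1 x))).div ((d0 x).pow 2) (pow_ne_zero 2 (p0 x).ne')
  have m1 : (fun s => dRho (dTau f) s t) = _ := funext fun s => by
    have e : (fun s => dTau f s t) = _ := funext fun s => hPDE s t ht'
    have := ((w1 s).add (v1 s)).sub_const c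
    exact (congrArg (fun F => deriv F s) e).trans this.deriv
  have m2 : dRho (dRho (dTau f)) x t = _ :=
    (congrArg (fun F => deriv F x) m1).trans (w2.add v2).deriv
  have m1x := congrFun m1 x
  have c1 : dTau (dRho f) x t = dRho (dTau f) x t := hS.comm ht
  have c2 : dTau (dRho (dRho f)) x t = dRho (dRho (dTau f)) x t := by
    rw [hS.dRho.comm ht]
    have : (fun s => dTau (dRho f) s t) = fun s => dRho (dTau f) s t :=
      funext fun s => hS.comm ht
    exact congrArg (fun F => deriv F x) this
  have tt := deriv_nonneg_left_max ht.1
    ((hS.dRho.dRho.tau (ρ := x) ht).div (hS.dRho.tau (ρ := x) ht) (p1 x).ne') htm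
  rw [c1, c2, m2] at tt
  beta_reduce at m1x
  rw [m1x] at tt
  have q0 := p0 x
  have q1 := p1 x
  clear m1 m2 m1x c1 c2 w1 w2 v1 v2 d0 d1 d2 d3 htm hx hPDE
  simp only [Pi.pow_apply, Pi.mul_apply, Pi.sub_apply] at z1 z2 tt
  generalize dRho (dRho (dRho (dRho f))) x t = f4 at *
  generalize dRho (dRho (dRho f)) x t = f3 at *
  generalize dRho (dRho f) x t = f2 at *
  generalize dRho f x t = f1 at *
  generalize f x t = f0 at *
  rw [z1] at tt
  generalize (((f4 * f1 + f3 * f2) - (f3 * f2 + f2 * f3)) * f1 ^ 2 -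
    (f3 * f1 - f2 * f2) * (((2 : ℕ) : ℝ) * f1 ^ (2 - 1) * f2)) / (f1 ^ 2) ^ 2 = W at *
  have h3 : f3 = f2 ^ 2 / f1 := by
    field_simp at z1 ⊢
    linarith
  subst h3
  by_contra! hc
  rw [div_lt_div_iff₀ q0 q1] at hc
  have hn' : (0 : ℝ) < n := by exact_mod_cast hn
  have hD : 0 < f2 * f0 - f1 * f1 := sub_pos.2 hc
  have hneg : 0 < 2 * n * (f2 * f0 - f1 * f1) / f0 ^ 3 := by positivity
  have hW : W / f1 ≤ 0 := div_nonpos_of_nonpos_of_nonneg z2 q1.le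
  refine absurd tt (not_le.2 (lt_of_eq_of_lt
    (b := W / f1 - 2 * n * (f2 * f0 - f1 * f1) / f0 ^ 3) ?_ (by linarith)))
  field_simp
  push_cast
  ring

/-- Upper-bound half of part (2) of Lemma 5.2 (est_2): if `f_ρρ/f_ρ` attains its supremum
over the strip `ℝ × [0, T−ε]` at `(ρ*, t*)`, then this supremum is at most
`max( sup_σ (f_ρρ/f_ρ)(σ, 0), (f_ρ/f)(ρ*, t*) )`; in particular, if `C₀ > 1` with
`f ≥ C₀⁻¹` and `f_ρ ≤ C₀` on `ℝ × [0, T)`, then `f_ρρ/f_ρ ≤ max( sup_σ (f_ρρ/f_ρ)(σ,0), C₀² )`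
on the strip. -/
theorem stmt6 (n : ℕ) (hn : 1 ≤ n) (ν lam T : ℝ) (hlam : 0 < lam) (hT : 0 < T)
    (f : ℝ → ℝ → ℝ)
    (hf : ContDiffOn ℝ (⊤ : ℕ∞) (fun p : ℝ × ℝ => f p.1 p.2) (univ ×ˢ Ico 0 T))
    (hfpos : ∀ ρ t, t ∈ Ico 0 T → 0 < f ρ t)
    (hfρpos : ∀ ρ t, t ∈ Ico 0 T → 0 < dRho f ρ t)
    (hPDE : ∀ ρ t, t ∈ Ico 0 T →
      deriv (fun τ => f ρ τ) t
        = dRho (dRho f) ρ t / dRho f ρ t + n * dRho f ρ t / f ρ t - ν / lam)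
    (ε : ℝ) (hε : 0 < ε) (hεT : ε < T)
    (ρstar tstar : ℝ) (htstar : tstar ∈ Icc 0 (T - ε))
    (hmax : ∀ ρ t, t ∈ Icc 0 (T - ε) →
      dRho (dRho f) ρ t / dRho f ρ t ≤ dRho (dRho f) ρstar tstar / dRho f ρstar tstar) :
    dRho (dRho f) ρstar tstar / dRho f ρstar tstar
      ≤ max (⨆ σ : ℝ, dRho (dRho f) σ 0 / dRho f σ 0)
          (dRho f ρstar tstar / f ρstar tstar) ∧
    ∀ C₀ : ℝ, 1 < C₀ →
      (∀ ρ t, t ∈ Ico 0 T → C₀⁻¹ ≤ f ρ t) →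
      (∀ ρ t, t ∈ Ico 0 T → dRho f ρ t ≤ C₀) →
      ∀ ρ t, t ∈ Icc 0 (T - ε) →
        dRho (dRho f) ρ t / dRho f ρ t
          ≤ max (⨆ σ : ℝ, dRho (dRho f) σ 0 / dRho f σ 0) (C₀ ^ 2) := by
  have hTε : T - ε < T := by linarith
  have hT0 : (0 : ℝ) ≤ T - ε := by linarith
  have first : dRho (dRho f) ρstar tstar / dRho f ρstar tstar
      ≤ max (⨆ σ : ℝ, dRho (dRho f) σ 0 / dRho f σ 0)
          (dRho f ρstar tstar / f ρstar tstar) := by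
    rcases htstar.1.eq_or_lt with h0 | h0
    · refine le_max_of_le_left ?_
      subst h0
      have hb : BddAbove (range fun σ : ℝ => dRho (dRho f) σ 0 / dRho f σ 0) :=
        ⟨_, by rintro _ ⟨σ, rfl⟩; exact hmax σ 0 ⟨le_rfl, hT0⟩⟩
      exact le_ciSup hb ρstar
    · refine le_max_of_le_right ?_
      have hS : SmoothOnStrip T f := fun ρ t ht => by
        refine hf.contDiffAt ?_
        filter_upwards [strip_nhds (ρ := ρ) ht] with p hp
        exact ⟨mem_univ _, hp.1.le, hp.2⟩
      exact key n hn (ν / lam) T f hS hfpos hfρpos hPDE ρstar tstar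
        ⟨h0, htstar.2.trans_lt hTε⟩ (fun ρ => hmax ρ tstar htstar)
        (fun s hs => hmax ρstar s ⟨hs.1, hs.2.trans htstar.2⟩)
  refine ⟨first, fun C₀ hC h1 h2 ρ t ht => (hmax ρ t ht).trans (first.trans ?_)⟩
  refine max_le_max le_rfl ?_
  have hm : tstar ∈ Ico 0 T := ⟨htstar.1, htstar.2.trans_lt hTε⟩
  have a := h1 ρstar tstar hm
  have b := h2 ρstar tstar hm
  have hC0 : 0 < C₀ := by linarith
  rw [div_le_iff₀ (hfpos _ _ hm)]
  calc _ ≤ C₀ := b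
    _ = C₀ ^ 2 * C₀⁻¹ := by field_simp
    _ ≤ _ := by gcongr
end
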